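/- Let B = C(D̄; ℝ)^n with norm ‖α‖ = max over components of the sup norms, let μ₀ = μ₀^g ⊗ ∏_{i=1}^n μ₀^i be a probability measure whose log-permeability components α_i are independent Gaussian measures μ₀^i = N(m_i, C_i) charging C(D̄;ℝ), and let 𝒢 be measurable with |𝒢(u)|_Γ ≤ C max_i exp(‖α_i‖_∞) for a constant C > 0. Define Φ(u;y) = ½|y − 𝒢(u)|_Γ² and let μ^y be the posterior with dμ^y/dμ₀ = Z(y)^{-1} exp(−Φ(·;y)), Z(y) = ∫ exp(−Φ(u;y)) dμ₀ > 0. Then for every fixed r > 0 there exist constants C₁ = C₁(r), C₂ = C₂(r) such that for all y, y' with max{|y|_Γ, |y'|_Γ} < r: d_TV(μ^y, μ^{y'}) ≤ C₁ |y − y'|_Γ and d_Hell(μ^y, μ^{y'}) ≤ C₂ |y − y'|_Γ. -/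

import Mathlib

open Real Matrix MeasureTheory ProbabilityTheory

/-- The covariance-weighted norm `|z|_Γ = |Γ^{-1/2} z|`, equivalently `|z|_Γ² = ⟨z, Γ⁻¹ z⟩`. -/
noncomputable def covNorm {J : ℕ} (Γ : Matrix (Fin J) (Fin J) ℝ) (z : Fin J → ℝ) : ℝ :=
  Real.sqrt (z ⬝ᵥ (Γ⁻¹ *ᵥ z))

/-- The model–data misfit `Φ(u;y) = ½ |y − 𝒢(u)|_Γ²`. -/
noncomputable def misfit {U : Type*} {J : ℕ} (Γ : Matrix (Fin J) (Fin J) ℝ)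
    (G : U → Fin J → ℝ) (u : U) (y : Fin J → ℝ) : ℝ :=
  (covNorm Γ (y - G u)) ^ 2 / 2

/-- The density `Z(y)⁻¹ exp(−Φ(u;y))` of the Bayesian posterior `μ^y` with respect to the
prior `μ₀`. -/
noncomputable def postDensity {U : Type*} [MeasurableSpace U] {J : ℕ}
    (Γ : Matrix (Fin J) (Fin J) ℝ) (G : U → Fin J → ℝ) (μ₀ : Measure U)
    (y : Fin J → ℝ) (u : U) : ℝ :=
  (∫ u', Real.exp (-(misfit Γ G u' y)) ∂μ₀)⁻¹ * Real.exp (-(misfit Γ G u y))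

lemma covNorm_exists_norm {J : ℕ} (Γ : Matrix (Fin J) (Fin J) ℝ) (hΓ : Γ.PosDef) :
    ∃ B : Matrix (Fin J) (Fin J) ℝ, ∀ z, covNorm Γ z = ‖WithLp.toLp 2 (B *ᵥ z)‖ := by
  obtain ⟨B, hB⟩ : ∃ B : Matrix (Fin J) (Fin J) ℝ, Γ⁻¹ = star B * B := by
    open scoped MatrixOrder in
    exact CStarAlgebra.nonneg_iff_eq_star_mul_self.1 hΓ.inv.posSemidef.nonneg
  refine ⟨B, fun z => ?_⟩
  rw [covNorm, hB, EuclideanSpace.norm_eq]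
  congr 1
  rw [← Matrix.mulVec_mulVec, Matrix.dotProduct_mulVec, Matrix.star_eq_conjTranspose,
    Matrix.conjTranspose_eq_transpose_of_trivial, Matrix.vecMul_transpose]
  simp [dotProduct, sq]

lemma exp_sq_lip (c : ℝ) (hc : 0 ≤ c) (hc1 : c ≤ 1) (a b : ℝ) :
    |Real.exp (-(c * a ^ 2)) - Real.exp (-(c * b ^ 2))| ≤ |a - b| := by
  have hd : ∀ x : ℝ, HasDerivAt (fun x : ℝ => Real.exp (-(c * x ^ 2)))
      (Real.exp (-(c * x ^ 2)) * (-(c * (2 * x)))) x := by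
    intro x
    have h := (((hasDerivAt_pow 2 x).const_mul c).neg).exp
    simpa using h
  have h := Convex.norm_image_sub_le_of_norm_hasDerivWithin_le (C := 1) (s := Set.univ)
    (f := fun x : ℝ => Real.exp (-(c * x ^ 2)))
    (fun x _ => (hd x).hasDerivWithinAt) ?_ convex_univ (Set.mem_univ b) (Set.mem_univ a)
  · simpa using h
  · intro x _
    rw [norm_mul, Real.norm_eq_abs, Real.norm_eq_abs, Real.abs_exp, Real.exp_neg, abs_neg,
      inv_mul_le_iff₀ (Real.exp_pos _), mul_one]
    have h1 := Real.add_one_le_exp (c * x ^ 2)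
    refine le_trans ?_ h1
    rw [abs_le]
    constructor <;> nlinarith [mul_nonneg hc (sq_nonneg (x - 1)), mul_nonneg hc (sq_nonneg (x + 1))]

lemma pair_bound {Z Z' e e' z δ L : ℝ} (hz : 0 < z) (hZ : z ≤ Z) (hZ' : z ≤ Z')
    (hZ1 : Z ≤ 1) (hZ1' : Z' ≤ 1) (hd : |Z - Z'| ≤ δ)
    (he : 0 ≤ e) (he' : 0 ≤ e') (he1 : e' ≤ 1) (hee : |e - e'| ≤ δ)
    (hss : |√e - √e'| ≤ δ) (hL : L = z⁻¹ + (z⁻¹) ^ 2) :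
    |Z⁻¹ * e - Z'⁻¹ * e'| ≤ L * δ ∧ |√(Z⁻¹ * e) - √(Z'⁻¹ * e')| ≤ L * δ := by
  have hδ : 0 ≤ δ := (abs_nonneg _).trans hd
  have p : 0 < Z := hz.trans_le hZ
  have p' : 0 < Z' := hz.trans_le hZ'
  have i1 : Z⁻¹ ≤ z⁻¹ := inv_anti₀ hz hZ
  have i1' : Z'⁻¹ ≤ z⁻¹ := inv_anti₀ hz hZ'
  have o1 : 1 ≤ Z⁻¹ := (one_le_inv₀ p).2 hZ1
  have o1' : 1 ≤ Z'⁻¹ := (one_le_inv₀ p').2 hZ1'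
  have hinv : |Z⁻¹ - Z'⁻¹| ≤ (z⁻¹) ^ 2 * δ := by
    have : Z⁻¹ - Z'⁻¹ = Z⁻¹ * Z'⁻¹ * (Z' - Z) := by field_simp
    rw [this, abs_mul, abs_of_pos (by positivity), abs_sub_comm, sq]
    gcongr
  have key : ∀ s s' g g' : ℝ, 0 ≤ s → s ≤ z⁻¹ → |s - s'| ≤ (z⁻¹) ^ 2 * δ → 0 ≤ g' → g' ≤ 1 →
      |g - g'| ≤ δ → |s * g - s' * g'| ≤ L * δ := by
    intro s s' g g' h0 h1 h2 h3 h4 h5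
    have : s * g - s' * g' = s * (g - g') + (s - s') * g' := by ring
    rw [this]
    refine (abs_add_le _ _).trans ?_
    rw [abs_mul, abs_mul, abs_of_nonneg h0, abs_of_nonneg h3, hL, add_mul]
    refine add_le_add (by gcongr) ?_
    calc |s - s'| * g' ≤ |s - s'| * 1 := by gcongr
      _ ≤ _ := by simpa using h2
  refine ⟨key _ _ _ _ (by positivity) i1 hinv he' he1 hee, ?_⟩
  rw [Real.sqrt_mul (by positivity), Real.sqrt_mul (by positivity)]
  have s1 : 1 ≤ √(Z⁻¹) := Real.one_le_sqrt.2 o1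
  have s1' : 1 ≤ √(Z'⁻¹) := Real.one_le_sqrt.2 o1'
  have q : √(Z⁻¹) * √(Z⁻¹) = Z⁻¹ := Real.mul_self_sqrt (by positivity)
  have q' : √(Z'⁻¹) * √(Z'⁻¹) = Z'⁻¹ := Real.mul_self_sqrt (by positivity)
  refine key _ _ _ _ (by positivity) (le_trans ?_ i1) (le_trans ?_ hinv) (by positivity)
    (Real.sqrt_le_one.2 he1) hss
  · nlinarith
  · have : Z⁻¹ - Z'⁻¹ = (√(Z⁻¹) - √(Z'⁻¹)) * (√(Z⁻¹) + √(Z'⁻¹)) := by linarith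
    rw [this, abs_mul, abs_of_nonneg (a := √(Z⁻¹) + √(Z'⁻¹)) (by positivity)]
    exact le_mul_of_one_le_right (abs_nonneg _) (by linarith)

/-- **Lipschitz well-posedness of the posterior for piecewise continuous permeabilities.**
The unknown consists of geometric parameters together with `n` continuous log-permeability
fields `α_i ∈ C(D̄;ℝ)` with independent Gaussian priors `N(m_i, C_i)` on `C(D̄;ℝ)` (here
`K` stands for the compact set `D̄`), and `|𝒢(u)|_Γ ≤ C max_i exp(‖α_i‖_∞)`.  Then for
every `r > 0` there exist `C₁(r), C₂(r)` such that for all data `y, y'` with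
`max{|y|_Γ, |y'|_Γ} < r`, `d_TV(μ^y, μ^{y'}) ≤ C₁|y − y'|_Γ` and
`d_Hell(μ^y, μ^{y'}) ≤ C₂|y − y'|_Γ`, the distances being computed via the posterior
densities with respect to the prior. -/
theorem posterior_lipschitz_wellPosedness_gaussian_fields
    {n J : ℕ} (hn : 0 < n) {V : Type*} [MeasurableSpace V]
    (K : Type*) [TopologicalSpace K] [CompactSpace K]
    [MeasurableSpace C(K, ℝ)] [BorelSpace C(K, ℝ)]
    (Γ : Matrix (Fin J) (Fin J) ℝ) (hΓ : Γ.PosDef) (hΓsymm : Γ.IsSymm)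
    (νg : Measure V) [IsProbabilityMeasure νg]  -- prior on the geometric parameters
    (μG : Fin n → Measure C(K, ℝ)) [∀ i, IsProbabilityMeasure (μG i)]
    -- each log-permeability prior μG i = N(m_i, C_i) is Gaussian on C(D̄;ℝ)
    (hGaussian : ∀ i, ∀ ℓ : C(K, ℝ) →L[ℝ] ℝ, ∃ (m : ℝ) (v : NNReal),
      (μG i).map ℓ = gaussianReal m v)
    (μ₀ : Measure (V × (Fin n → C(K, ℝ))))
    (hμ₀ : μ₀ = νg.prod (Measure.pi fun i => μG i))
    (G : (V × (Fin n → C(K, ℝ))) → Fin J → ℝ) (hGmeas : Measurable G)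
    (C : ℝ) (hC : 0 < C)
    (hGbound : ∀ u : V × (Fin n → C(K, ℝ)),
      covNorm Γ (G u) ≤ C * ⨆ i, Real.exp ‖u.2 i‖)
    (r : ℝ) (hr : 0 < r)
    (hZ : ∀ y : Fin J → ℝ, covNorm Γ y ≤ r →
      0 < ∫ u, Real.exp (-(misfit Γ G u y)) ∂μ₀) :
    ∃ C₁ C₂ : ℝ, ∀ y y' : Fin J → ℝ, covNorm Γ y < r → covNorm Γ y' < r →
      ((1 / 2) * ∫ u, |postDensity Γ G μ₀ y u - postDensity Γ G μ₀ y' u| ∂μ₀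
          ≤ C₁ * covNorm Γ (y - y')) ∧
      (Real.sqrt ((1 / 2) * ∫ u,
            (Real.sqrt (postDensity Γ G μ₀ y u) -
              Real.sqrt (postDensity Γ G μ₀ y' u)) ^ 2 ∂μ₀)
          ≤ C₂ * covNorm Γ (y - y')) := by
  have hprob : IsProbabilityMeasure μ₀ := by rw [hμ₀]; infer_instance
  obtain ⟨B, hB⟩ := covNorm_exists_norm Γ hΓ
  have hcont : Continuous (covNorm Γ) := by
    unfold covNorm
    fun_prop
  have hnn : ∀ z, 0 ≤ covNorm Γ z := fun z => Real.sqrt_nonneg _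
  have htri : ∀ z w, |covNorm Γ z - covNorm Γ w| ≤ covNorm Γ (z - w) := by
    intro z w
    rw [hB, hB, hB, Matrix.mulVec_sub, WithLp.toLp_sub]
    exact abs_norm_sub_norm_le _ _
  have hadd : ∀ z w, covNorm Γ (z - w) ≤ covNorm Γ z + covNorm Γ w := by
    intro z w
    rw [hB, hB, hB, Matrix.mulVec_sub, WithLp.toLp_sub]
    exact norm_sub_le _ _
  have hint : ∀ f : (V × (Fin n → C(K, ℝ))) → ℝ, Measurable f → (∀ u, 0 ≤ f u) →
      Integrable (fun u => Real.exp (-(f u))) μ₀ := by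
    intro f hf h0
    refine Integrable.of_bound (C := 1) (hf.neg.exp).aestronglyMeasurable (ae_of_all _ fun u => ?_)
    rw [Real.norm_eq_abs, Real.abs_exp, Real.exp_le_one_iff]
    linarith [h0 u]
  have hmis : ∀ y, Integrable (fun u => Real.exp (-(misfit Γ G u y))) μ₀ := by
    intro y
    refine hint (fun u => misfit Γ G u y) ?_ (fun u => by unfold misfit; positivity)
    unfold misfit
    exact ((hcont.measurable.comp (hGmeas.const_sub y)).pow_const 2).div_const 2
  have hlow := hint (fun u => (r + covNorm Γ (G u)) ^ 2 / 2)
    ((((hcont.measurable.comp hGmeas).const_add r).pow_const 2).div_const 2)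
    (fun u => by positivity)
  set z := ∫ u, Real.exp (-((r + covNorm Γ (G u)) ^ 2 / 2)) ∂μ₀ with hz
  have hzpos : 0 < z := integral_exp_pos hlow
  set Z : (Fin J → ℝ) → ℝ := fun y => ∫ u, Real.exp (-(misfit Γ G u y)) ∂μ₀ with hZdef
  have hzZ : ∀ y, covNorm Γ y < r → z ≤ Z y := by
    intro y hy
    refine integral_mono hlow (hmis y) fun u => ?_
    refine Real.exp_le_exp.2 (neg_le_neg ?_)
    unfold misfit
    have := hadd y (G u)
    have := hnn (y - G u)
    gcongr
    linarith
  have he1 : ∀ y u, Real.exp (-(misfit Γ G u y)) ≤ 1 := by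
    intro y u
    rw [Real.exp_le_one_iff]
    unfold misfit
    have := sq_nonneg (covNorm Γ (y - G u))
    linarith
  have hZ1 : ∀ y, Z y ≤ 1 := by
    intro y
    have := integral_mono (hmis y) (integrable_const (1 : ℝ)) (he1 y)
    simpa using this
  have hdiff : ∀ y y' u, |covNorm Γ (y - G u) - covNorm Γ (y' - G u)| ≤ covNorm Γ (y - y') := by
    intro y y' u
    simpa using htri (y - G u) (y' - G u)
  have hee : ∀ y y' u, |Real.exp (-(misfit Γ G u y)) - Real.exp (-(misfit Γ G u y'))|
      ≤ covNorm Γ (y - y') := by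
    intro y y' u
    refine le_trans ?_ (hdiff y y' u)
    have := exp_sq_lip (1 / 2) (by norm_num) (by norm_num) (covNorm Γ (y - G u))
      (covNorm Γ (y' - G u))
    rw [show misfit Γ G u y = 1 / 2 * covNorm Γ (y - G u) ^ 2 by unfold misfit; ring,
      show misfit Γ G u y' = 1 / 2 * covNorm Γ (y' - G u) ^ 2 by unfold misfit; ring]
    exact this
  have hss : ∀ y y' u, |√(Real.exp (-(misfit Γ G u y))) - √(Real.exp (-(misfit Γ G u y')))|
      ≤ covNorm Γ (y - y') := by
    intro y y' u
    refine le_trans ?_ (hdiff y y' u)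
    have := exp_sq_lip (1 / 4) (by norm_num) (by norm_num) (covNorm Γ (y - G u))
      (covNorm Γ (y' - G u))
    rw [← Real.exp_half, ← Real.exp_half]
    rw [show -misfit Γ G u y / 2 = -(1 / 4 * covNorm Γ (y - G u) ^ 2) by unfold misfit; ring,
      show -misfit Γ G u y' / 2 = -(1 / 4 * covNorm Γ (y' - G u) ^ 2) by unfold misfit; ring]
    exact this
  have hZZ : ∀ y y', |Z y - Z y'| ≤ covNorm Γ (y - y') := by
    intro y y'
    rw [hZdef]
    simp only
    rw [← integral_sub (hmis y) (hmis y'), ← Real.norm_eq_abs]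
    have := norm_integral_le_of_norm_le_const (μ := μ₀)
      (f := fun u => Real.exp (-(misfit Γ G u y)) - Real.exp (-(misfit Γ G u y')))
      (ae_of_all _ (hee y y'))
    simpa using this
  have hLnn : 0 ≤ z⁻¹ + (z⁻¹) ^ 2 := by positivity
  refine ⟨z⁻¹ + (z⁻¹) ^ 2, z⁻¹ + (z⁻¹) ^ 2, fun y y' hy hy' => ?_⟩
  have hpt := fun u => pair_bound hzpos (hzZ y hy) (hzZ y' hy') (hZ1 y) (hZ1 y') (hZZ y y')
    (Real.exp_nonneg (-(misfit Γ G u y))) (Real.exp_nonneg (-(misfit Γ G u y'))) (he1 y' u)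
    (hee y y' u) (hss y y' u) rfl
  set D := (z⁻¹ + (z⁻¹) ^ 2) * covNorm Γ (y - y') with hD
  have hDnn : 0 ≤ D := mul_nonneg hLnn (hnn _)
  constructor
  · have := norm_integral_le_of_norm_le_const (μ := μ₀) (C := D)
      (f := fun u => |postDensity Γ G μ₀ y u - postDensity Γ G μ₀ y' u|)
      (ae_of_all _ fun u => by rw [Real.norm_eq_abs, abs_abs]; exact (hpt u).1)
    have h2 := (le_abs_self _).trans this
    simp only [probReal_univ, mul_one] at h2
    linarith
  · have := norm_integral_le_of_norm_le_const (μ := μ₀) (C := D ^ 2)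
      (f := fun u => (Real.sqrt (postDensity Γ G μ₀ y u) -
              Real.sqrt (postDensity Γ G μ₀ y' u)) ^ 2)
      (ae_of_all _ fun u => by
        rw [Real.norm_eq_abs, abs_pow]
        exact pow_le_pow_left₀ (abs_nonneg _) (hpt u).2 2)
    have h2 := (le_abs_self _).trans this
    simp only [probReal_univ, mul_one] at h2
    refine Real.sqrt_le_iff.2 ⟨hDnn, ?_⟩
    nlinarith [sq_nonneg D]
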